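/- arXiv:2004.14197 — 4 statements merged into one kernel-verified Lean document; each statement's English description precedes it below -/
import Mathlib

section
/- Given an arbitrary formal group law F over a commutative ring R, there is a unique power series q(x,y) ∈ R⟦x,y⟧ such that x[-1]y = (x−y)·q(x,y). Furthermore, q(x,y) is a unit of R⟦x,y⟧ and q(x,y) ≡ 1 mod (y); equivalently q(x,0) = 1. -/
noncomputable section
open MvPowerSeries

variable {k : Type*} [CommRing k]

/-- Substitution of a family of power series (each with zero constant term) into a
multivariate power series, via the standard coefficient formula. -/
def psSubst {σ τ : Type*} [Fintype σ] [DecidableEq σ]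
    (a : σ → MvPowerSeries τ k) (f : MvPowerSeries σ k) : MvPowerSeries τ k :=
  fun e => ∑ d ∈ Finset.Iic (Finsupp.equivFunOnFinite.symm fun _ : σ => e.sum fun _ m => m),
    (MvPowerSeries.coeff d f) * MvPowerSeries.coeff e (∏ i, a i ^ d i)

/-- The automorphism of `k⟦x,y⟧` exchanging the two variables. -/
def swapPS (f : MvPowerSeries (Fin 2) k) : MvPowerSeries (Fin 2) k :=
  fun d => MvPowerSeries.coeff (Finsupp.equivMapDomain (Equiv.swap 0 1) d) f

/-- A formal group law over `k`. -/
def IsFormalGroupLaw (F : MvPowerSeries (Fin 2) k) : Prop :=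
  swapPS F = F ∧
  psSubst ![X 0, 0] F = (X 0 : MvPowerSeries (Fin 2) k) ∧
  psSubst ![0, X 1] F = (X 1 : MvPowerSeries (Fin 2) k) ∧
  psSubst ![psSubst ![(X 0 : MvPowerSeries (Fin 3) k), X 1] F, X 2] F =
    psSubst ![(X 0 : MvPowerSeries (Fin 3) k), psSubst ![(X 1 : MvPowerSeries (Fin 3) k), X 2] F] F

/-- The formal difference `x [-1] y = F(x, ι(y)) ∈ k⟦x,y⟧`, where `ι` is the formal inverse. -/
def formalDiff (F : MvPowerSeries (Fin 2) k) (ι : PowerSeries k) : MvPowerSeries (Fin 2) k :=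
  psSubst ![X 0, psSubst (fun _ : Unit => (X 1 : MvPowerSeries (Fin 2) k)) ι] F

/-!
A power series in `x` and `y` that vanishes on the diagonal `x = y` is divisible by `x - y`: the
change of coordinates `x ↦ x + y` turns `x - y` into the variable `x`, and the diagonal into the
locus `x = 0`. The formal difference vanishes on the diagonal because `F(y, [-1]y) = 0`, which gives
`q`; it is unique because the same change of coordinates shows that `x - y` is a nonzerodivisor.
Restricting `x [-1] y = (x - y) q` to `y = 0` gives `x = x q(x, 0)`, hence `q(x, 0) = 1`; in
particular the constant coefficient of `q` is `1`, and `q` is a unit.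
-/

section psSubst

variable {σ τ : Type*} [Fintype σ] {a : σ → MvPowerSeries τ k}

lemma coeff_prod_pow_eq_zero (ha : ∀ i, constantCoeff (a i) = 0) {d : σ →₀ ℕ} {e : τ →₀ ℕ}
    (h : e.degree < d.degree) : coeff e (∏ i, a i ^ d i) = 0 := by
  apply coeff_of_lt_order
  calc (e.degree : ℕ∞) < d.degree := by exact_mod_cast h
    _ = ∑ i, (d i : ℕ∞) := by rw [Finsupp.degree_eq_sum, Nat.cast_sum]
    _ ≤ ∑ i, (a i ^ d i).order :=
      Finset.sum_le_sum fun i _ ↦ le_order_pow_of_constantCoeff_eq_zero _ (ha i)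
    _ ≤ (∏ i, a i ^ d i).order := le_order_prod _ _

lemma psSubst_eq_subst [DecidableEq σ] (ha : ∀ i, constantCoeff (a i) = 0)
    (f : MvPowerSeries σ k) : psSubst a f = subst a f := by
  ext e
  have prod_pow (d : σ →₀ ℕ) : (d.prod fun i n ↦ a i ^ n) = ∏ i, a i ^ d i :=
    Finsupp.prod_fintype _ _ fun _ ↦ pow_zero _
  simp only [coeff_subst (hasSubst_of_constantCoeff_zero ha), prod_pow, smul_eq_mul]
  refine (finsum_eq_sum_of_support_subset _ fun d hd ↦ ?_).symm
  have hde : d.degree ≤ e.degree := by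
    by_contra! h
    exact hd (by simp only [coeff_prod_pow_eq_zero ha h, mul_zero])
  exact Finset.mem_coe.2 (Finset.mem_Iic.2 fun i ↦ (d.le_degree i).trans hde)

end psSubst

lemma isUnit_of_X_dvd_sub_one {σ : Type*} {i : σ} {f : MvPowerSeries σ k} (h : X i ∣ f - 1) :
    IsUnit f := by
  have constantCoeff_sub_one : constantCoeff (f - 1) = 0 := by
    obtain ⟨r, hr⟩ := h
    rw [hr, map_mul, constantCoeff_X, zero_mul]
  rw [isUnit_iff_constantCoeff, ← sub_add_cancel f 1, map_add, constantCoeff_sub_one]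
  simp

section Update

variable {σ τ : Type*} [DecidableEq σ] {i : σ} {a : σ → MvPowerSeries τ k}

lemma hasSubst_update (ha : HasSubst a) (i : σ) {g : MvPowerSeries τ k}
    (hg : IsNilpotent (constantCoeff g)) : HasSubst (Function.update a i g) where
  const_coeff s := by
    obtain rfl | h := eq_or_ne s i
    · rwa [Function.update_self]
    · rw [Function.update_of_ne h]
      exact ha.const_coeff s
  coeff_zero d := by
    refine ((ha.coeff_zero d).insert i).subset fun s hs ↦ ?_
    obtain rfl | h := eq_or_ne s i
    · exact Set.mem_insert _ _
    · exact Set.mem_insert_of_mem _ (by simpa [h] using hs)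

lemma hasSubst_update_X (i : σ) {g : MvPowerSeries σ k} (hg : IsNilpotent (constantCoeff g)) :
    HasSubst (Function.update X i g) :=
  hasSubst_update .X i hg

lemma subst_subst_update_X (ha : HasSubst a) {f g : MvPowerSeries σ k}
    (hg : IsNilpotent (constantCoeff g)) :
    subst a (subst (Function.update X i g) f) = subst (Function.update a i (subst a g)) f := by
  rw [subst_comp_subst_apply (hasSubst_update_X i hg) ha]
  congr 1
  ext1 j
  obtain rfl | h := eq_or_ne j i <;> simp [*, subst_X ha]

lemma X_dvd_iff_subst_update_zero {f : MvPowerSeries σ k} :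
    X i ∣ f ↔ subst (Function.update X i (0 : MvPowerSeries σ k)) f = 0 := by
  have update_eq_smul : Function.update X i (0 : MvPowerSeries σ k) =
      Function.update (1 : σ → k) i 0 • X := by
    ext1 j
    obtain rfl | h := eq_or_ne j i <;> simp [*]
  have prod_pow (d : σ →₀ ℕ) : (d.prod fun j n ↦ Function.update (1 : σ → k) i 0 j ^ n) =
      if d i = 0 then 1 else 0 := by
    split_ifs with hd
    · refine Finset.prod_eq_one fun j hj ↦ ?_
      have hji : j ≠ i := by rintro rfl; exact Finsupp.mem_support_iff.1 hj hd
      simp only [Function.update_of_ne hji, Pi.one_apply, one_pow]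
    · exact Finset.prod_eq_zero (Finsupp.mem_support_iff.2 hd) (by simp [hd])
  rw [update_eq_smul, ← rescale_eq_subst, X_dvd_iff, MvPowerSeries.ext_iff]
  simp [prod_pow]

end Update

section FactorTheorem

variable {σ : Type*} [DecidableEq σ] {i : σ} {f g : MvPowerSeries σ k}

lemma subst_update_eq_self (hgi : subst (Function.update X i 0) g = g)
    {h : MvPowerSeries σ k} (hh : IsNilpotent (constantCoeff h)) :
    subst (Function.update X i h) g = g := by
  have hX := hasSubst_update_X i hh
  have subst_zero : subst (Function.update X i h) (0 : MvPowerSeries σ k) = 0 := by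
    rw [← coe_substAlgHom hX, map_zero]
  calc subst (Function.update X i h) g
      = subst (Function.update X i h) (subst (Function.update X i 0) g) := by rw [hgi]
    _ = subst (Function.update X i 0) g := by
      rw [subst_subst_update_X hX (by simp), subst_zero, Function.update_idem]
    _ = g := hgi

lemma subst_update_zero_neg (hgi : subst (Function.update X i 0) g = g) :
    subst (Function.update X i 0) (-g) = -g := by
  have hX := hasSubst_update_X i (g := (0 : MvPowerSeries σ k)) (by simp)
  rw [← coe_substAlgHom hX, map_neg, coe_substAlgHom hX, hgi]

lemma subst_update_sub_subst_update_add (hg : IsNilpotent (constantCoeff g))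
    (hgi : subst (Function.update X i 0) g = g) :
    subst (Function.update X i (X i - g)) (subst (Function.update X i (X i + g)) f) = f := by
  have hX := hasSubst_update_X i (g := X i - g) (by simpa using hg)
  rw [subst_subst_update_X hX (by simpa using hg), subst_add hX, subst_X hX,
    subst_update_eq_self hgi (by simpa using hg), Function.update_self,
    sub_add_cancel, Function.update_idem, Function.update_eq_self, subst_self, id]

/-- The shear of `k⟦σ⟧` in the variable `X i` by a power series `g` not involving `X i`: the change
of coordinates sending `X i` to `X i + g` and fixing the other variables. That `g` does not involve
`X i` is encoded as its invariance under the substitution `X i ↦ 0`. -/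
def shearAlgEquiv (hg : IsNilpotent (constantCoeff g))
    (hgi : subst (Function.update X i 0) g = g) : MvPowerSeries σ k ≃ₐ[k] MvPowerSeries σ k :=
  { substAlgHom (hasSubst_update_X i (g := X i + g) (by simpa using hg)) with
    invFun := subst (Function.update X i (X i - g))
    left_inv f := by
      simpa using subst_update_sub_subst_update_add hg hgi
    right_inv f := by
      simpa [sub_eq_add_neg] using subst_update_sub_subst_update_add (f := f)
        (by simpa using hg.neg) (subst_update_zero_neg hgi) }

lemma shearAlgEquiv_apply (hg : IsNilpotent (constantCoeff g))
    (hgi : subst (Function.update X i 0) g = g) :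
    shearAlgEquiv hg hgi f = subst (Function.update X i (X i + g)) f :=
  congr_fun (coe_substAlgHom (hasSubst_update_X i (by simpa using hg))) f

lemma shearAlgEquiv_X_sub (hg : IsNilpotent (constantCoeff g))
    (hgi : subst (Function.update X i 0) g = g) :
    shearAlgEquiv hg hgi (X i - g) = X i := by
  have hX := hasSubst_update_X i (g := X i + g) (by simpa using hg)
  rw [shearAlgEquiv_apply, subst_sub hX, subst_X hX, Function.update_self,
    subst_update_eq_self hgi (by simpa using hg), add_sub_cancel_right]

lemma isRegular_X_sub (hg : IsNilpotent (constantCoeff g))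
    (hgi : subst (Function.update X i 0) g = g) : IsRegular (X i - g) := by
  refine isRegular_iff_mem_nonZeroDivisors.2
    (mem_nonZeroDivisors_of_injective (shearAlgEquiv hg hgi).injective ?_)
  rw [shearAlgEquiv_X_sub]
  exact X_mem_nonzeroDivisors

lemma X_sub_dvd_iff (hg : IsNilpotent (constantCoeff g))
    (hgi : subst (Function.update X i 0) g = g) :
    X i - g ∣ f ↔ subst (Function.update X i g) f = 0 := by
  have hX := hasSubst_update_X i (g := (0 : MvPowerSeries σ k)) (by simp)
  rw [← map_dvd_iff (shearAlgEquiv hg hgi), shearAlgEquiv_X_sub, X_dvd_iff_subst_update_zero,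
    shearAlgEquiv_apply, subst_subst_update_X hX (by simpa using hg), subst_add hX,
    subst_X hX, hgi, Function.update_self, zero_add, Function.update_idem]

end FactorTheorem

section FormalDifference

variable {F : MvPowerSeries (Fin 2) k} {ι : PowerSeries k}

lemma formalDiff_eq_subst (hι0 : PowerSeries.constantCoeff ι = 0) :
    formalDiff F ι = subst ![X 0, ι.subst (X 1 : MvPowerSeries (Fin 2) k)] F := by
  have inverse_eq : psSubst (fun _ : Unit ↦ (X 1 : MvPowerSeries (Fin 2) k)) ι = ι.subst (X 1) :=
    psSubst_eq_subst (by simp) ι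
  rw [formalDiff, inverse_eq, psSubst_eq_subst]
  simp [Fin.forall_fin_two, PowerSeries.constantCoeff_subst_eq_zero, hι0]

lemma subst_formalDiff (hι0 : PowerSeries.constantCoeff ι = 0) {τ : Type*}
    {a : Fin 2 → MvPowerSeries τ k} (ha : HasSubst a) :
    subst a (formalDiff F ι) = subst ![a 0, ι.subst (a 1)] F := by
  rw [formalDiff_eq_subst hι0, subst_comp_subst_apply _ ha]
  · congr 1
    ext1 i
    fin_cases i
    · exact subst_X ha 0
    · simp [← PowerSeries.toMvPowerSeries_eq_subst, PowerSeries.subst_toMvPowerSeries ha]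
  · apply hasSubst_of_constantCoeff_zero
    simp [Fin.forall_fin_two, PowerSeries.constantCoeff_subst_eq_zero, hι0]

lemma subst_diagonal_formalDiff (hι0 : PowerSeries.constantCoeff ι = 0)
    (hι : psSubst ![PowerSeries.X, ι] F = 0) :
    subst (Function.update X 0 (X 1 : MvPowerSeries (Fin 2) k)) (formalDiff F ι) = 0 := by
  have constantCoeff_eq_zero :
      ∀ i, constantCoeff ((![PowerSeries.X, ι] : Fin 2 → MvPowerSeries Unit k) i) = 0 :=
    Fin.forall_fin_two.2 ⟨PowerSeries.constantCoeff_X, hι0⟩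
  have hX1 : HasSubst fun _ : Unit ↦ (X 1 : MvPowerSeries (Fin 2) k) :=
    (PowerSeries.HasSubst.X 1).const
  rw [subst_formalDiff hι0 (hasSubst_update_X 0 (by simp))]
  calc subst ![Function.update X 0 (X 1) 0, ι.subst (Function.update X 0 (X 1) 1)] F
      = subst (fun _ : Unit ↦ (X 1 : MvPowerSeries (Fin 2) k)) (subst ![PowerSeries.X, ι] F) := by
        rw [subst_comp_subst_apply (hasSubst_of_constantCoeff_zero constantCoeff_eq_zero) hX1]
        congr 1
        ext1 i
        fin_cases i
        · exact (subst_X hX1 ()).symm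
        · rfl
    _ = 0 := by
      rw [← psSubst_eq_subst constantCoeff_eq_zero, hι, ← coe_substAlgHom hX1, map_zero]

lemma subst_right_zero_formalDiff
    (hF : psSubst ![X 0, 0] F = (X 0 : MvPowerSeries (Fin 2) k))
    (hι0 : PowerSeries.constantCoeff ι = 0) :
    subst (Function.update X 1 (0 : MvPowerSeries (Fin 2) k)) (formalDiff F ι) = X 0 := by
  rw [subst_formalDiff hι0 (hasSubst_update_X 1 (by simp)), Function.update_self,
    Function.update_of_ne zero_ne_one, PowerSeries.subst_zero_of_constantCoeff_zero hι0,
    ← psSubst_eq_subst (by simp [Fin.forall_fin_two]), hF]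

lemma X_one_dvd_sub_one_of_formalDiff_eq_mul
    (hF : psSubst ![X 0, 0] F = (X 0 : MvPowerSeries (Fin 2) k))
    (hι0 : PowerSeries.constantCoeff ι = 0) {q : MvPowerSeries (Fin 2) k}
    (hq : formalDiff F ι = ((X 0 : MvPowerSeries (Fin 2) k) - X 1) * q) :
    (X 1 : MvPowerSeries (Fin 2) k) ∣ q - 1 := by
  have hX := hasSubst_update_X (1 : Fin 2) (g := (0 : MvPowerSeries (Fin 2) k)) (by simp)
  have X_eq_X_mul : (X 0 : MvPowerSeries (Fin 2) k) =
      X 0 * subst (Function.update X 1 (0 : MvPowerSeries (Fin 2) k)) q := by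
    conv_lhs => rw [← subst_right_zero_formalDiff hF hι0, hq, subst_mul hX, subst_sub hX,
      subst_X hX, subst_X hX, Function.update_of_ne zero_ne_one, Function.update_self, sub_zero]
  have isRegular_X : IsRegular (X 0 : MvPowerSeries (Fin 2) k) :=
    isRegular_iff_mem_nonZeroDivisors.2 X_mem_nonzeroDivisors
  have subst_eq_one : subst (Function.update X 1 (0 : MvPowerSeries (Fin 2) k)) q = 1 :=
    isRegular_X.left (X_eq_X_mul.symm.trans (mul_one _).symm)
  rw [X_dvd_iff_subst_update_zero, ← coe_substAlgHom hX, map_sub, map_one, coe_substAlgHom hX,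
    subst_eq_one, sub_self]

end FormalDifference

theorem stmt1_general (F : MvPowerSeries (Fin 2) k)
    (hF : psSubst ![X 0, 0] F = (X 0 : MvPowerSeries (Fin 2) k))
    (ι : PowerSeries k) (hι0 : PowerSeries.constantCoeff ι = 0)
    (hι : psSubst ![PowerSeries.X, ι] F = 0) :
    (∃! q : MvPowerSeries (Fin 2) k,
        formalDiff F ι = ((X 0 : MvPowerSeries (Fin 2) k) - X 1) * q) ∧
    ∀ q : MvPowerSeries (Fin 2) k,
      formalDiff F ι = ((X 0 : MvPowerSeries (Fin 2) k) - X 1) * q →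
      IsUnit q ∧ (X 1 : MvPowerSeries (Fin 2) k) ∣ q - 1 := by
  have hX1 : IsNilpotent (constantCoeff (X 1 : MvPowerSeries (Fin 2) k)) := by simp
  have subst_X_one :
      subst (Function.update X 0 (0 : MvPowerSeries (Fin 2) k)) (X 1 : MvPowerSeries (Fin 2) k) =
        X 1 := by
    rw [subst_X (hasSubst_update_X 0 (by simp)), Function.update_of_ne one_ne_zero]
  obtain ⟨q, hq⟩ : (X 0 : MvPowerSeries (Fin 2) k) - X 1 ∣ formalDiff F ι :=
    (X_sub_dvd_iff hX1 subst_X_one).2 (subst_diagonal_formalDiff hι0 hι)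
  refine ⟨⟨q, hq, fun q' hq' ↦ ?_⟩, fun q' hq' ↦ ?_⟩
  · exact (isRegular_X_sub hX1 subst_X_one).left (hq'.symm.trans hq)
  · have hdvd := X_one_dvd_sub_one_of_formalDiff_eq_mul hF hι0 hq'
    exact ⟨isUnit_of_X_dvd_sub_one hdvd, hdvd⟩

theorem stmt1 (F : MvPowerSeries (Fin 2) k) (hF : IsFormalGroupLaw F)
    (ι : PowerSeries k) (hι0 : PowerSeries.constantCoeff ι = 0)
    (hι : psSubst ![PowerSeries.X, ι] F = 0) :
    (∃! q : MvPowerSeries (Fin 2) k,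
        formalDiff F ι = ((X 0 : MvPowerSeries (Fin 2) k) - X 1) * q) ∧
    ∀ q : MvPowerSeries (Fin 2) k,
      formalDiff F ι = ((X 0 : MvPowerSeries (Fin 2) k) - X 1) * q →
      IsUnit q ∧ (X 1 : MvPowerSeries (Fin 2) k) ∣ q - 1 :=
  stmt1_general F hF.2.1 ι hι0 hι
end
end

section
/- Let F be a formal group law over a commutative ring R with associated unit q(x,y), and set p = q⁻¹ ∈ R⟦x,y⟧. Fix n ≥ 2 and a root α = (i,j) with 1 ≤ i < j ≤ n; write p_{ij} = p(x_i, x_j) ∈ R⟦x₁,…,x_n⟧ and let r_α be the R-algebra automorphism of R⟦x₁,…,x_n⟧ exchanging x_i and x_j. Then for every f ∈ R⟦x₁,…,x_n⟧ there is a unique power series A_α(f) ∈ R⟦x₁,…,x_n⟧ such that (x_i − x_j)·A_α(f) = p_{ij}·f − r_α(p_{ij}·f). (Thus the generalized divided difference operator A_α(f) = f/(x_i[-1]x_j) + r_α(f)/(x_j[-1]x_i) is well defined and involves no denominators.) -/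
noncomputable section
open MvPowerSeries

variable {k : Type*} [CommRing k]

/-- The automorphism of `k⟦x₁,…⟧` induced by a permutation of the variables. -/
def renamePS {σ : Type*} (e : Equiv.Perm σ) (f : MvPowerSeries σ k) : MvPowerSeries σ k :=
  fun d => MvPowerSeries.coeff (Finsupp.equivMapDomain e d) f

/-
Expand formally `xᵢ / (xᵢ - xⱼ) = ∑ₜ (xⱼ / xᵢ)ᵗ`. A given coefficient of the product of a power
series `h` with this geometric series involves only finitely many terms, as `h` has no negative
powers of `xⱼ`. Keeping the part `T h` of the product without negative powers of `xᵢ` gives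
`(xᵢ - xⱼ) g = h ↔ xᵢ g = T h`, so that division by `xᵢ - xⱼ` reduces to division by the regular
element `xᵢ`: what remains is that the coefficients of `T h` at exponents without `xᵢ` vanish. Such
a coefficient is the sum of the coefficients of `h` at the monomials `m xᵢˢ xⱼᵗ` with `s + t = N`,
for fixed `N` and a fixed monomial `m` free of `xᵢ` and `xⱼ`. It is unchanged when `xᵢ` and `xⱼ` are
exchanged in `h`, so it is zero for `h - r_α h`.
-/

section

open Finset.HasAntidiagonal (antidiagonal)

variable {σ : Type*} {i j : σ}

theorem coeff_X_mul_of_apply_eq_zero {d : σ →₀ ℕ} (hd : d i = 0) (g : MvPowerSeries σ k) :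
    coeff d (X i * g) = 0 :=
  X_dvd_iff.1 (dvd_mul_right _ g) d hd

theorem coeff_single_add_X_mul (i : σ) (d : σ →₀ ℕ) (g : MvPowerSeries σ k) :
    coeff (Finsupp.single i 1 + d) (X i * g) = coeff d g := by
  rw [X_def, coeff_add_monomial_mul, one_mul]

/-- The coefficient at `d` sums the coefficients of `h` over all exponents obtained from `d` by
transferring part of the exponent of `xⱼ` to `xᵢ`. This is the part without negative powers of `xᵢ`
of the formal product of `h` with `xᵢ / (xᵢ - xⱼ) = ∑ₜ (xⱼ / xᵢ)ᵗ`. -/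
def transferSum (i j : σ) (h : MvPowerSeries σ k) : MvPowerSeries σ k :=
  fun d => ∑ p ∈ antidiagonal (d j),
    coeff (Finsupp.single i p.1 + Finsupp.single j p.2 + d.erase j) h

theorem coeff_transferSum (i j : σ) (h : MvPowerSeries σ k) (d : σ →₀ ℕ) :
    coeff d (transferSum i j h) = ∑ p ∈ antidiagonal (d j),
      coeff (Finsupp.single i p.1 + Finsupp.single j p.2 + d.erase j) h :=
  rfl

theorem transferSum_sub (i j : σ) (h h' : MvPowerSeries σ k) :
    transferSum i j (h - h') = transferSum i j h - transferSum i j h' := by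
  ext d
  simp only [coeff_transferSum, map_sub, Finset.sum_sub_distrib]

theorem coeff_transferSum_of_apply_eq_zero (i : σ) {d : σ →₀ ℕ} (hd : d j = 0)
    (h : MvPowerSeries σ k) : coeff d (transferSum i j h) = coeff d h := by
  simp [coeff_transferSum, hd]

theorem coeff_single_add_transferSum (hij : i ≠ j) (d : σ →₀ ℕ) (h : MvPowerSeries σ k) :
    coeff (Finsupp.single j 1 + d) (transferSum i j h) =
      coeff (Finsupp.single j 1 + d) h +
        coeff (Finsupp.single i 1 + d) (transferSum i j h) := by
  have hj : (Finsupp.single j 1 + d : σ →₀ ℕ) j = d j + 1 := by simp [add_comm]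
  have hi : (Finsupp.single i 1 + d : σ →₀ ℕ) j = d j := by simp [hij.symm]
  have hfirst : Finsupp.single j (d j + 1) + d.erase j = Finsupp.single j 1 + d := by
    rw [add_comm (d j), Finsupp.single_add, add_assoc, Finsupp.single_add_erase]
  rw [coeff_transferSum, coeff_transferSum, hj, hi, Finset.Nat.sum_antidiagonal_succ]
  congr 1
  · simp only [Finsupp.single_zero, Finsupp.erase_add, Finsupp.erase_single, zero_add, hfirst]
  · refine Finset.sum_congr rfl fun p _ => congrArg (coeff · h) ?_
    simp only [Finsupp.erase_add, Finsupp.erase_single, Finsupp.erase_single_ne hij.symm,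
      Finsupp.single_add, zero_add]
    abel

theorem transferSum_X_sub_X_mul (hij : i ≠ j) (g : MvPowerSeries σ k) :
    transferSum i j ((X i - X j) * g) = X i * g := by
  ext d
  induction hm : d j generalizing d with
  | zero =>
    rw [coeff_transferSum_of_apply_eq_zero i hm, sub_mul, map_sub,
      coeff_X_mul_of_apply_eq_zero hm, sub_zero]
  | succ m ih =>
    obtain ⟨d, rfl⟩ := exists_add_of_le (Finsupp.single_le_iff.2 (hm ▸ m.succ_pos : 1 ≤ d j))
    have hd : (Finsupp.single i 1 + d : σ →₀ ℕ) j = m := by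
      simpa [hij.symm, add_comm 1] using hm
    rw [coeff_single_add_transferSum hij, ih _ hd, coeff_single_add_X_mul, sub_mul, map_sub,
      coeff_single_add_X_mul, sub_add_cancel]

theorem X_sub_X_mul_eq_iff (hij : i ≠ j) {g h : MvPowerSeries σ k} :
    (X i - X j) * g = h ↔ X i * g = transferSum i j h := by
  refine ⟨fun hg => by rw [← hg, transferSum_X_sub_X_mul hij], fun hg => ?_⟩
  ext d
  rw [sub_mul, map_sub, hg]
  rcases eq_or_ne (d j) 0 with hd | hd
  · rw [coeff_transferSum_of_apply_eq_zero i hd, coeff_X_mul_of_apply_eq_zero hd, sub_zero]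
  · obtain ⟨d, rfl⟩ := exists_add_of_le (Finsupp.single_le_iff.2 (Nat.one_le_iff_ne_zero.2 hd))
    rw [coeff_single_add_transferSum hij, ← hg, coeff_single_add_X_mul, coeff_single_add_X_mul,
      add_sub_cancel_right]

variable [DecidableEq σ]

theorem equivMapDomain_swap_single_add_single_add_erase (hij : i ≠ j) {d : σ →₀ ℕ} (hd : d i = 0)
    (s t : ℕ) :
    Finsupp.equivMapDomain (Equiv.swap i j)
        (Finsupp.single i s + Finsupp.single j t + d.erase j) =
      Finsupp.single i t + Finsupp.single j s + d.erase j := by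
  ext x
  rw [Finsupp.equivMapDomain_apply, Equiv.symm_swap]
  rcases eq_or_ne x i with rfl | hxi
  · simp [hij, hij.symm, hd]
  rcases eq_or_ne x j with rfl | hxj
  · simp [hij, hij.symm, hd]
  · simp [Equiv.swap_apply_of_ne_of_ne hxi hxj, hxi, hxj]

theorem coeff_transferSum_renamePS_swap (hij : i ≠ j) {d : σ →₀ ℕ} (hd : d i = 0)
    (h : MvPowerSeries σ k) :
    coeff d (transferSum i j (renamePS (Equiv.swap i j) h)) = coeff d (transferSum i j h) := by
  rw [coeff_transferSum, coeff_transferSum, ← Finset.Nat.sum_antidiagonal_swap]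
  refine Finset.sum_congr rfl fun p _ => congrArg (coeff · h) ?_
  exact equivMapDomain_swap_single_add_single_add_erase hij hd p.2 p.1

theorem X_dvd_transferSum_sub_renamePS_swap (hij : i ≠ j) (h : MvPowerSeries σ k) :
    X i ∣ transferSum i j (h - renamePS (Equiv.swap i j) h) := by
  refine X_dvd_iff.2 fun d hd => ?_
  rw [transferSum_sub, map_sub, coeff_transferSum_renamePS_swap hij hd, sub_self]

theorem stmt5_general (hij : i ≠ j) (h : MvPowerSeries σ k) :
    ∃! g : MvPowerSeries σ k,
      ((X i : MvPowerSeries σ k) - X j) * g = h - renamePS (Equiv.swap i j) h := by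
  obtain ⟨g, hg⟩ := X_dvd_transferSum_sub_renamePS_swap hij h
  have hreg : IsLeftRegular (X i : MvPowerSeries σ k) :=
    isLeftRegular_iff_mem_nonZeroDivisorsLeft.2 X_mem_nonzeroDivisors.1
  refine ⟨g, (X_sub_X_mul_eq_iff hij).2 hg.symm, fun g' hg' => hreg ?_⟩
  exact ((X_sub_X_mul_eq_iff hij).1 hg').trans hg

end

theorem stmt5 (F : MvPowerSeries (Fin 2) k) (hF : IsFormalGroupLaw F)
    (ι : PowerSeries k) (hι0 : PowerSeries.constantCoeff ι = 0)
    (hι : psSubst ![PowerSeries.X, ι] F = 0)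
    (q p : MvPowerSeries (Fin 2) k)
    (hq : formalDiff F ι = ((X 0 : MvPowerSeries (Fin 2) k) - X 1) * q)
    (hp : p * q = 1)
    (n : ℕ) (hn : 2 ≤ n) (i j : Fin n) (hij : i < j)
    (f : MvPowerSeries (Fin n) k) :
    ∃! g : MvPowerSeries (Fin n) k,
      ((X i : MvPowerSeries (Fin n) k) - X j) * g =
        psSubst ![(X i : MvPowerSeries (Fin n) k), X j] p * f -
          renamePS (Equiv.swap i j)
            (psSubst ![(X i : MvPowerSeries (Fin n) k), X j] p * f) :=
  stmt5_general hij.ne _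
end
end

section
/- Let F be a formal group law over a commutative ring R, and consider the ring of R-linear endomorphisms of R⟦x₁,…,x_n⟧. The R-subalgebra generated by all multiplication operators (multiplication by elements of R⟦x₁,…,x_n⟧) together with the generalized divided difference operators A_{α_i} for the simple roots α_i = (i,i+1), 1 ≤ i < n, is identically equal to the R-subalgebra generated by all multiplication operators together with the classical divided difference operators D_{α_i} (the completed affine nilHecke algebra). -/
noncomputable section
open MvPowerSeries

variable {k : Type*} [CommRing k]

/-!
With `u` the image of `p` in `k⟦x₁,…,x_n⟧`, the operators `A_α` and `D_α ∘ u` agree after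
multiplication by `x_i - x_j`, which is not a zero divisor over any coefficient ring, so
`A_α = D_α ∘ u`. As `p`, hence `u`, is invertible, also `D_α = A_α ∘ u⁻¹`, and each family of
operators lies in the algebra generated by the other one together with the multiplications.
-/

section Regularity

variable {σ R : Type*}

theorem coeff_eq_zero_of_X_mul_eq_X_mul [Semiring R] {i j : σ} (hij : i ≠ j)
    {g : MvPowerSeries σ R} (h : X i * g = X j * g) (d : σ →₀ ℕ) : coeff d g = 0 := by
  classical
  -- The coefficients of `g` at `x^d` and `x_i x^d / x_j` agree, so the exponent of `x_j` descends.
  induction hm : d j using Nat.strong_induction_on generalizing d with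
  | h m ih =>
    have hshift : coeff d g = if Finsupp.single j 1 ≤ Finsupp.single i 1 + d then
        coeff (Finsupp.single i 1 + d - Finsupp.single j 1) g else 0 := by
      have hcoeff := congrArg (coeff (Finsupp.single i 1 + d)) h
      rwa [X_def, X_def, coeff_add_monomial_mul, coeff_monomial_mul, one_mul, one_mul] at hcoeff
    rw [hshift]
    split_ifs with hle
    · have hpos : 1 ≤ d j := by simpa [hij] using hle j
      refine ih _ ?_ _ rfl
      simp only [Finsupp.coe_tsub, Finsupp.coe_add, Pi.sub_apply, Pi.add_apply,
        Finsupp.single_eq_same, Finsupp.single_eq_of_ne hij.symm]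
      omega
    · rfl

theorem isLeftRegular_X_sub_X [Ring R] {i j : σ} (hij : i ≠ j) :
    IsLeftRegular (X i - X j : MvPowerSeries σ R) := by
  refine isLeftRegular_of_non_zero_divisor _ fun g hg => MvPowerSeries.ext fun d => ?_
  rw [sub_mul, sub_eq_zero] at hg
  exact coeff_eq_zero_of_X_mul_eq_X_mul hij hg d

end Regularity

section Substitution

variable {σ τ : Type*} [Fintype σ] [DecidableEq σ] (a : σ → MvPowerSeries τ k)

theorem constantCoeff_psSubst (f : MvPowerSeries σ k) :
    constantCoeff (psSubst a f) = constantCoeff f := by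
  have hzero : (Finsupp.equivFunOnFinite.symm fun _ : σ => (0 : τ →₀ ℕ).sum fun _ m => m) = 0 := by
    ext s
    simp
  have hIic : Finset.Iic (0 : σ →₀ ℕ) = {0} := Finset.Iic_bot
  rw [← coeff_zero_eq_constantCoeff_apply, coeff_apply, psSubst, hzero, hIic]
  simp

theorem isUnit_psSubst {f : MvPowerSeries σ k} (hf : IsUnit f) : IsUnit (psSubst a f) := by
  rw [isUnit_iff_constantCoeff] at hf ⊢
  rwa [constantCoeff_psSubst]

end Substitution

theorem setOf_exists_and_eq_eq_range {I β : Type*} (P : I → Prop) (f : I → β) :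
    {y | ∃ i, P i ∧ y = f i} = Set.range fun i : Subtype P => f i := by
  ext y
  simp only [Set.mem_ofPred_eq, Set.mem_range, Subtype.exists, exists_prop, eq_comm]

theorem adjoin_union_le_of_forall_eq_mul {R B : Type*} [CommSemiring R] [Semiring B] [Algebra R B]
    {s t t' : Set B} (h : ∀ x ∈ t, ∃ y ∈ t', ∃ m ∈ s, x = y * m) :
    Algebra.adjoin R (s ∪ t) ≤ Algebra.adjoin R (s ∪ t') := by
  refine Algebra.adjoin_le (Set.union_subset ?_ fun x hx => ?_)
  · exact Set.subset_union_left.trans Algebra.subset_adjoin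
  · obtain ⟨y, hy, m, hm, rfl⟩ := h x hx
    exact mul_mem (Algebra.subset_adjoin (Or.inr hy)) (Algebra.subset_adjoin (Or.inl hm))

section DividedDifference

variable {S : Type*} [Ring S] [Algebra k S]

/-- `T` is the divided difference operator `f ↦ (u f - r (u f)) / c` of weight `u`, with the
division expressed by multiplying through by `c`. For `c = x_i - x_j` and `r = r_α`, the classical
operator `D_α` has weight `1`, and the generalized operator `A_α` has weight `p(x_i, x_j)`. -/
def IsDividedDifference (c : S) (r : S → S) (u : S) (T : Module.End k S) : Prop :=
  ∀ f, c * T f = u * f - r (u * f)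

theorem IsDividedDifference.eq_mul_mulLeft {c u v : S} {r : S → S} {T U : Module.End k S}
    (hc : IsLeftRegular c) (hT : IsDividedDifference c r (u * v) T)
    (hU : IsDividedDifference c r u U) : T = U * LinearMap.mulLeft k v := by
  refine LinearMap.ext fun f => hc ?_
  calc
    c * T f = u * v * f - r (u * v * f) := hT f
    _ = u * (v * f) - r (u * (v * f)) := by rw [mul_assoc]
    _ = c * (U * LinearMap.mulLeft k v) f := (hU (v * f)).symm

variable {I : Type*} {c u v : I → S} {r : I → S → S} {A B : I → Module.End k S}

theorem adjoin_dividedDifference_le_of_dvd (hc : ∀ α, IsLeftRegular (c α))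
    (hA : ∀ α, IsDividedDifference (c α) (r α) (u α) (A α))
    (hB : ∀ α, IsDividedDifference (c α) (r α) (v α) (B α)) (hvu : ∀ α, v α ∣ u α) :
    Algebra.adjoin k (Set.range (LinearMap.mulLeft k : S → Module.End k S) ∪ Set.range A) ≤
      Algebra.adjoin k (Set.range (LinearMap.mulLeft k : S → Module.End k S) ∪ Set.range B) := by
  apply adjoin_union_le_of_forall_eq_mul
  rintro _ ⟨α, rfl⟩
  obtain ⟨w, hw⟩ := hvu α
  exact ⟨B α, ⟨α, rfl⟩, LinearMap.mulLeft k w, ⟨w, rfl⟩,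
    IsDividedDifference.eq_mul_mulLeft (hc α) (hw ▸ hA α) (hB α)⟩

theorem adjoin_dividedDifference_eq_of_associated (hc : ∀ α, IsLeftRegular (c α))
    (hA : ∀ α, IsDividedDifference (c α) (r α) (u α) (A α))
    (hB : ∀ α, IsDividedDifference (c α) (r α) (v α) (B α)) (huv : ∀ α, Associated (u α) (v α)) :
    Algebra.adjoin k (Set.range (LinearMap.mulLeft k : S → Module.End k S) ∪ Set.range A) =
      Algebra.adjoin k (Set.range (LinearMap.mulLeft k : S → Module.End k S) ∪ Set.range B) :=
  le_antisymm (adjoin_dividedDifference_le_of_dvd hc hA hB fun α => (huv α).dvd')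
    (adjoin_dividedDifference_le_of_dvd hc hB hA fun α => (huv α).dvd)

end DividedDifference

theorem stmt8_general {σ I : Type*} [DecidableEq σ] {i j : I → σ} (hij : ∀ α, i α ≠ j α)
    {u : I → MvPowerSeries σ k} (hu : ∀ α, IsUnit (u α))
    {A D : I → Module.End k (MvPowerSeries σ k)}
    (hA : ∀ α, IsDividedDifference (X (i α) - X (j α)) (renamePS (Equiv.swap (i α) (j α)))
      (u α) (A α))
    (hD : ∀ α, IsDividedDifference (X (i α) - X (j α)) (renamePS (Equiv.swap (i α) (j α)))
      1 (D α)) :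
    Algebra.adjoin k (Set.range (LinearMap.mulLeft k) ∪ Set.range A) =
      Algebra.adjoin k (Set.range (LinearMap.mulLeft k) ∪ Set.range D) :=
  adjoin_dividedDifference_eq_of_associated (fun α => isLeftRegular_X_sub_X (hij α)) hA hD
    fun α => associated_one_iff_isUnit.mpr (hu α)

theorem stmt8 (F : MvPowerSeries (Fin 2) k) (hF : IsFormalGroupLaw F)
    (ι : PowerSeries k) (hι0 : PowerSeries.constantCoeff ι = 0)
    (hι : psSubst ![PowerSeries.X, ι] F = 0)
    (q p : MvPowerSeries (Fin 2) k)
    (hq : formalDiff F ι = ((X 0 : MvPowerSeries (Fin 2) k) - X 1) * q)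
    (hp : p * q = 1)
    (n : ℕ)
    (A D : ℕ → Module.End k (MvPowerSeries (Fin n) k))
    -- `A i` is the generalized divided difference operator for the simple root `(i, i+1)`
    (hA : ∀ (i : ℕ) (hi : i + 1 < n) (f : MvPowerSeries (Fin n) k),
      ((X (⟨i, Nat.lt_of_succ_lt hi⟩ : Fin n) : MvPowerSeries (Fin n) k) - X ⟨i + 1, hi⟩) *
          (A i f) =
        psSubst ![(X (⟨i, Nat.lt_of_succ_lt hi⟩ : Fin n) : MvPowerSeries (Fin n) k),
            X ⟨i + 1, hi⟩] p * f -
          renamePS (Equiv.swap ⟨i, Nat.lt_of_succ_lt hi⟩ ⟨i + 1, hi⟩)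
            (psSubst ![(X (⟨i, Nat.lt_of_succ_lt hi⟩ : Fin n) : MvPowerSeries (Fin n) k),
                X ⟨i + 1, hi⟩] p * f))
    -- `D i` is the classical divided difference operator for the simple root `(i, i+1)`
    (hD : ∀ (i : ℕ) (hi : i + 1 < n) (f : MvPowerSeries (Fin n) k),
      ((X (⟨i, Nat.lt_of_succ_lt hi⟩ : Fin n) : MvPowerSeries (Fin n) k) - X ⟨i + 1, hi⟩) *
          (D i f) =
        f - renamePS (Equiv.swap ⟨i, Nat.lt_of_succ_lt hi⟩ ⟨i + 1, hi⟩) f) :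
    -- the algebra generated by multiplication operators and the `A i` equals
    -- the algebra generated by multiplication operators and the `D i`
    Algebra.adjoin k
        ((Set.range fun g : MvPowerSeries (Fin n) k =>
            (LinearMap.mulLeft k g : Module.End k (MvPowerSeries (Fin n) k))) ∪
          {T | ∃ i : ℕ, i + 1 < n ∧ T = A i}) =
      Algebra.adjoin k
        ((Set.range fun g : MvPowerSeries (Fin n) k =>
            (LinearMap.mulLeft k g : Module.End k (MvPowerSeries (Fin n) k))) ∪
          {T | ∃ i : ℕ, i + 1 < n ∧ T = D i}) := by
  rw [setOf_exists_and_eq_eq_range, setOf_exists_and_eq_eq_range]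
  exact stmt8_general (fun i => by simp) (fun _ => isUnit_psSubst _ (.of_mul_eq_one q hp))
    (fun i => hA i i.2) fun i f => by simpa only [one_mul] using hD i i.2 f
end
end

section
/- Let N ≥ 1 and let n₁ > n₂ > … > n_N ≥ 0 be strictly decreasing nonnegative integers. Then in ℤ[x₁,…,x_N] the alternant Σ_{σ ∈ S_N} sgn(σ)·Π_{i=1}^N x_{σ(i)}^{n_i} is divisible by the Vandermonde product Π_{1≤i<j≤N} (x_i − x_j), and the quotient is a symmetric polynomial (the Schur polynomial s_λ for the partition λ with λ_i = n_i − N + i). -/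
open MvPolynomial

/-!
Let `P` be the product of the `t - xₖ`. The value of a polynomial `q` at each `xᵢ` equals that of
its remainder modulo `P`, which has degree less than `N`; hence the matrix of the `qⱼ(xᵢ)` is the
Vandermonde matrix times the matrix of coefficients of the remainders of the `qⱼ`. Since `P` is
symmetric in the `xₖ`, so are these coefficients, and so is their determinant, which is the
quotient sought; its symmetry thus needs no cancellation of the Vandermonde product.
-/

section RemainderMatrix

variable {S T : Type*} [CommRing S] [CommRing T] {N : ℕ}

theorem eval_eq_sum_coeff_modByMonic_of_isRoot {P : Polynomial S} (hP : P.Monic)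
    (hdeg : P.natDegree ≤ N) {a : S} (ha : P.IsRoot a) (q : Polynomial S) :
    q.eval a = ∑ k : Fin N, (q %ₘ P).coeff k * a ^ (k : ℕ) := by
  nontriviality S
  have hlt : (q %ₘ P).degree < N :=
    (Polynomial.degree_modByMonic_lt q hP).trans_le (Polynomial.degree_le_of_natDegree_le hdeg)
  calc q.eval a = (q %ₘ P).eval a := (Polynomial.eval₂_modByMonic_eq_self_of_root ha).symm
    _ = (q %ₘ P).sum fun k c => c * a ^ k := Polynomial.eval_eq_sum
    _ = ∑ k : Fin N, (q %ₘ P).coeff k * a ^ (k : ℕ) :=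
      (Polynomial.sum_fin (fun k c => c * a ^ k) (fun _ => zero_mul _) hlt).symm

/-- The matrix whose `j`-th column lists the coefficients, from that of degree `N - 1` down to the
constant one, of the remainder of `q j` modulo the product of the `X - v k`. Its determinant is the
quotient of that of the `(q j).eval (v i)` by the product of the `v i - v j` with `i < j`; listing
the coefficients in ascending order would give the differences `v j - v i` instead. -/
noncomputable def remainderMatrix (v : Fin N → S) (q : Fin N → Polynomial S) :
    Matrix (Fin N) (Fin N) S :=
  .of fun k j => (q j %ₘ Lagrange.nodal Finset.univ v).coeff k.rev

theorem remainderMatrix_comp_perm (v : Fin N → S) (q : Fin N → Polynomial S)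
    (σ : Equiv.Perm (Fin N)) : remainderMatrix (v ∘ σ) q = remainderMatrix v q := by
  simp only [remainderMatrix, Lagrange.nodal, Function.comp_apply,
    Equiv.prod_comp σ fun k => Polynomial.X - Polynomial.C (v k)]

theorem map_remainderMatrix (f : S →+* T) (v : Fin N → S) (q : Fin N → Polynomial S) :
    (remainderMatrix v q).map f = remainderMatrix (f ∘ v) fun j => (q j).map f := by
  have hnodal : (Lagrange.nodal Finset.univ v).map f = Lagrange.nodal Finset.univ (f ∘ v) := by
    simp [Lagrange.nodal, Polynomial.map_prod]
  ext k j
  simp only [remainderMatrix, Matrix.map_apply, Matrix.of_apply, ← Polynomial.coeff_map,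
    Polynomial.map_modByMonic f Lagrange.nodal_monic, hnodal]

theorem of_eval_eq_projVandermonde_mul_remainderMatrix (v : Fin N → S)
    (q : Fin N → Polynomial S) :
    Matrix.of (fun i j => (q j).eval (v i)) = Matrix.projVandermonde 1 v * remainderMatrix v q := by
  have hdeg : (Lagrange.nodal Finset.univ v).natDegree ≤ N := by
    nontriviality S
    simp
  ext i j
  have hroot : (Lagrange.nodal Finset.univ v).IsRoot (v i) :=
    Lagrange.eval_nodal_at_node (Finset.mem_univ i)
  calc (q j).eval (v i)
      = ∑ k : Fin N, (q j %ₘ Lagrange.nodal Finset.univ v).coeff k * v i ^ (k : ℕ) :=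
        eval_eq_sum_coeff_modByMonic_of_isRoot Lagrange.nodal_monic hdeg hroot (q j)
    _ = ∑ k : Fin N, (q j %ₘ Lagrange.nodal Finset.univ v).coeff k.rev * v i ^ (k.rev : ℕ) :=
        (Equiv.sum_comp Fin.revPerm _).symm
    _ = (Matrix.projVandermonde 1 v * remainderMatrix v q) i j := by
        simp [Matrix.mul_apply, Matrix.projVandermonde_apply, remainderMatrix, mul_comm]

theorem det_projVandermonde_one_left (v : Fin N → S) :
    (Matrix.projVandermonde 1 v).det =
      ∏ x ∈ Finset.univ.filter (fun x : Fin N × Fin N => x.1 < x.2), (v x.1 - v x.2) := by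
  rw [Matrix.det_projVandermonde,
    Finset.prod_finset_product _ Finset.univ Finset.Ioi fun x => by simp]
  simp only [Pi.one_apply, one_mul]

end RemainderMatrix

theorem isSymmetric_det_remainderMatrix {R : Type*} [CommRing R] {N : ℕ}
    (p : Fin N → Polynomial R) :
    (remainderMatrix (X : Fin N → MvPolynomial (Fin N) R)
      fun j => (p j).map C).det.IsSymmetric := by
  intro σ
  let f : MvPolynomial (Fin N) R →+* MvPolynomial (Fin N) R := (rename σ).toRingHom
  have hX : f ∘ X = X ∘ σ := funext fun i => rename_X σ i
  have hC : f.comp C = C := RingHom.ext fun r => rename_C σ r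
  change f _ = _
  rw [RingHom.map_det, RingHom.mapMatrix_apply, map_remainderMatrix, hX, remainderMatrix_comp_perm]
  simp only [Polynomial.map_map, hC]

theorem stmt16_general {R : Type*} [CommRing R] {N : ℕ} (p : Fin N → Polynomial R) :
    ∃ s : MvPolynomial (Fin N) R,
      (∑ σ : Equiv.Perm (Fin N), (Equiv.Perm.sign σ : ℤ) • ∏ i,
          Polynomial.aeval (X (σ i) : MvPolynomial (Fin N) R) (p i)) =
        (∏ x ∈ Finset.univ.filter (fun x : Fin N × Fin N => x.1 < x.2),
          ((X x.1 : MvPolynomial (Fin N) R) - X x.2)) * s ∧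
      s.IsSymmetric := by
  refine ⟨_, ?_, isSymmetric_det_remainderMatrix p⟩
  rw [← det_projVandermonde_one_left, ← Matrix.det_mul,
    ← of_eval_eq_projVandermonde_mul_remainderMatrix, Matrix.det_apply]
  simp only [Matrix.of_apply, Polynomial.eval_map, Polynomial.aeval_def, algebraMap_eq,
    Units.smul_def]

theorem stmt16 (N : ℕ) (hN : 1 ≤ N) (n : Fin N → ℕ) (hn : StrictAnti n) :
    ∃ s : MvPolynomial (Fin N) ℤ,
      -- the alternant is the Vandermonde product times `s` …
      (∑ σ : Equiv.Perm (Fin N), (Equiv.Perm.sign σ : ℤ) • ∏ i, (X (σ i) : MvPolynomial (Fin N) ℤ) ^ n i) =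
        (∏ x ∈ Finset.univ.filter (fun x : Fin N × Fin N => x.1 < x.2),
          ((X x.1 : MvPolynomial (Fin N) ℤ) - X x.2)) * s ∧
      -- … and `s` is a symmetric polynomial
      s.IsSymmetric := by
  simpa only [map_pow, Polynomial.aeval_X] using
    stmt16_general fun i => (Polynomial.X ^ n i : Polynomial ℤ)
end
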